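/- arXiv:1907.04705 — 2 statements merged into one kernel-verified Lean document; each statement's English description precedes it below -/
import Mathlib

section
/- Let $n \ge 1$, $L_1, L_2 > 0$, $B = [0,L_1]\times[0,L_2]$, let $\mathcal{H}(z^1,z^2, x, x_{[10]}, x_{[01]}, x_{[20]}, x_{[11]}, x_{[02]})$ be a smooth second-order density with $x$-slots in $\mathbb{R}^n$, and let $x : \mathbb{R}\times B \to \mathbb{R}^n$ be smooth. Define $\mathscr{H}(t) = \iint_B \mathcal{H}[x]\,dz^1 dz^2$. Then for every $t$: $\frac{d\mathscr{H}}{dt} = \iint_B \dot{x}^\alpha\,\delta_\alpha\mathcal{H}[x]\,dz^1dz^2 \;+\; \int_0^{L_2}\Big[\dot{x}^\alpha\big(\mathcal{H}^{[10]}_\alpha - \partial_1\mathcal{H}^{[20]}_\alpha - \partial_2\mathcal{H}^{[11]}_\alpha\big) + \dot{x}^\alpha_{[10]}\mathcal{H}^{[20]}_\alpha\Big]_{z^1=0}^{z^1=L_1} dz^2 \;+\; \int_0^{L_1}\Big[\dot{x}^\alpha\big(\mathcal{H}^{[01]}_\alpha - \partial_2\mathcal{H}^{[02]}_\alpha - \partial_1\mathcal{H}^{[11]}_\alpha\big)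 + \dot{x}^\alpha_{[01]}\mathcal{H}^{[02]}_\alpha\Big]_{z^2=0}^{z^2=L_2} dz^1 \;+\; \Big[\big[\dot{x}^\alpha\,\mathcal{H}^{[11]}_\alpha\big]_{z^1=0}^{z^1=L_1}\Big]_{z^2=0}^{z^2=L_2}$, where $\mathcal{H}^{[J]}_\alpha$ abbreviates the composed partial derivative $(\partial_{x^\alpha_{[J]}}\mathcal{H})[x]$, summation over $\alpha$ is understood, and $\dot{x} = \partial_t x$, $x_{[10]} = \partial_1 x$, $x_{[01]} = \partial_2 x$. -/
open MeasureTheory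

/-- The jet space `(z¹, z², x, x_[10], x_[01], x_[20], x_[11], x_[02])`. -/
abbrev Jet2 (n : ℕ) :=
  ℝ × ℝ × (Fin n → ℝ) × (Fin n → ℝ) × (Fin n → ℝ) × (Fin n → ℝ) × (Fin n → ℝ) × (Fin n → ℝ)

/-- Time derivative of a field `f(t,z¹,z²)`. -/
noncomputable def pt2 {E : Type*} [NormedAddCommGroup E] [NormedSpace ℝ E]
    (f : ℝ → ℝ → ℝ → E) : ℝ → ℝ → ℝ → E := fun t a b => deriv (fun s => f s a b) t

/-- Derivative `∂₁` with respect to `z¹`. -/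
noncomputable def dz1 {E : Type*} [NormedAddCommGroup E] [NormedSpace ℝ E]
    (f : ℝ → ℝ → ℝ → E) : ℝ → ℝ → ℝ → E := fun t a b => deriv (fun s => f t s b) a

/-- Derivative `∂₂` with respect to `z²`. -/
noncomputable def dz2 {E : Type*} [NormedAddCommGroup E] [NormedSpace ℝ E]
    (f : ℝ → ℝ → ℝ → E) : ℝ → ℝ → ℝ → E := fun t a b => deriv (fun s => f t a s) b

/-- Second-order jet of the field `x` at `(t, z¹, z²)`. -/
noncomputable def jet2 {n : ℕ} (x : ℝ → ℝ → ℝ → Fin n → ℝ) (t a b : ℝ) : Jet2 n :=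
  (a, b, x t a b, dz1 x t a b, dz2 x t a b,
    dz1 (dz1 x) t a b, dz1 (dz2 x) t a b, dz2 (dz2 x) t a b)

/-- Composed partial derivative `(∂H/∂x^α)[x]`. -/
noncomputable def sl00 {n : ℕ} (H : Jet2 n → ℝ) (x : ℝ → ℝ → ℝ → Fin n → ℝ)
    (α : Fin n) : ℝ → ℝ → ℝ → ℝ :=
  fun t a b => fderiv ℝ H (jet2 x t a b) (0, 0, Pi.single α 1, 0, 0, 0, 0, 0)

/-- Composed partial derivative `(∂H/∂x^α_[10])[x]`. -/
noncomputable def sl10 {n : ℕ} (H : Jet2 n → ℝ) (x : ℝ → ℝ → ℝ → Fin n → ℝ)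
    (α : Fin n) : ℝ → ℝ → ℝ → ℝ :=
  fun t a b => fderiv ℝ H (jet2 x t a b) (0, 0, 0, Pi.single α 1, 0, 0, 0, 0)

/-- Composed partial derivative `(∂H/∂x^α_[01])[x]`. -/
noncomputable def sl01 {n : ℕ} (H : Jet2 n → ℝ) (x : ℝ → ℝ → ℝ → Fin n → ℝ)
    (α : Fin n) : ℝ → ℝ → ℝ → ℝ :=
  fun t a b => fderiv ℝ H (jet2 x t a b) (0, 0, 0, 0, Pi.single α 1, 0, 0, 0)

/-- Composed partial derivative `(∂H/∂x^α_[20])[x]`. -/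
noncomputable def sl20 {n : ℕ} (H : Jet2 n → ℝ) (x : ℝ → ℝ → ℝ → Fin n → ℝ)
    (α : Fin n) : ℝ → ℝ → ℝ → ℝ :=
  fun t a b => fderiv ℝ H (jet2 x t a b) (0, 0, 0, 0, 0, Pi.single α 1, 0, 0)

/-- Composed partial derivative `(∂H/∂x^α_[11])[x]`. -/
noncomputable def sl11 {n : ℕ} (H : Jet2 n → ℝ) (x : ℝ → ℝ → ℝ → Fin n → ℝ)
    (α : Fin n) : ℝ → ℝ → ℝ → ℝ :=
  fun t a b => fderiv ℝ H (jet2 x t a b) (0, 0, 0, 0, 0, 0, Pi.single α 1, 0)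

/-- Composed partial derivative `(∂H/∂x^α_[02])[x]`. -/
noncomputable def sl02 {n : ℕ} (H : Jet2 n → ℝ) (x : ℝ → ℝ → ℝ → Fin n → ℝ)
    (α : Fin n) : ℝ → ℝ → ℝ → ℝ :=
  fun t a b => fderiv ℝ H (jet2 x t a b) (0, 0, 0, 0, 0, 0, 0, Pi.single α 1)

/-- Variational derivative `δ_α H[x]` on the two-dimensional spatial domain. -/
noncomputable def varDer2 {n : ℕ} (H : Jet2 n → ℝ) (x : ℝ → ℝ → ℝ → Fin n → ℝ)
    (α : Fin n) : ℝ → ℝ → ℝ → ℝ :=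
  fun t a b =>
    sl00 H x α t a b - dz1 (sl10 H x α) t a b - dz2 (sl01 H x α) t a b
      + dz1 (dz1 (sl20 H x α)) t a b + dz1 (dz2 (sl11 H x α)) t a b
      + dz2 (dz2 (sl02 H x α)) t a b

/-- Boundary contribution on edges with normal direction `z¹`:
`ẋ^α (H^[10]_α - ∂₁H^[20]_α - ∂₂H^[11]_α) + ẋ^α_[10] H^[20]_α` (summed over `α`). -/
noncomputable def edge1 {n : ℕ} (H : Jet2 n → ℝ) (x : ℝ → ℝ → ℝ → Fin n → ℝ) :
    ℝ → ℝ → ℝ → ℝ :=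
  fun t a b =>
    ∑ α : Fin n,
      (pt2 x t a b α * (sl10 H x α t a b - dz1 (sl20 H x α) t a b - dz2 (sl11 H x α) t a b)
        + pt2 (dz1 x) t a b α * sl20 H x α t a b)

/-- Boundary contribution on edges with normal direction `z²`:
`ẋ^α (H^[01]_α - ∂₂H^[02]_α - ∂₁H^[11]_α) + ẋ^α_[01] H^[02]_α` (summed over `α`). -/
noncomputable def edge2 {n : ℕ} (H : Jet2 n → ℝ) (x : ℝ → ℝ → ℝ → Fin n → ℝ) :
    ℝ → ℝ → ℝ → ℝ :=
  fun t a b =>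
    ∑ α : Fin n,
      (pt2 x t a b α * (sl01 H x α t a b - dz2 (sl02 H x α) t a b - dz1 (sl11 H x α) t a b)
        + pt2 (dz2 x) t a b α * sl02 H x α t a b)

/-- Corner contribution `ẋ^α H^[11]_α` (summed over `α`). -/
noncomputable def corner2 {n : ℕ} (H : Jet2 n → ℝ) (x : ℝ → ℝ → ℝ → Fin n → ℝ) :
    ℝ → ℝ → ℝ → ℝ :=
  fun t a b => ∑ α : Fin n, pt2 x t a b α * sl11 H x α t a b

/-- joint smoothness -/
def Smo {E : Type*} [NormedAddCommGroup E] [NormedSpace ℝ E] (f : ℝ → ℝ → ℝ → E) : Prop :=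
  ContDiff ℝ (⊤ : ℕ∞) (fun q : ℝ × ℝ × ℝ => f q.1 q.2.1 q.2.2)

section aux
variable {E : Type*} [NormedAddCommGroup E] [NormedSpace ℝ E] {f g : ℝ → ℝ → ℝ → E}

lemma Smo.hasF (hf : Smo f) (q : ℝ × ℝ × ℝ) : HasFDerivAt (fun q : ℝ × ℝ × ℝ => f q.1 q.2.1 q.2.2)
    (fderiv ℝ (fun q : ℝ × ℝ × ℝ => f q.1 q.2.1 q.2.2) q) q :=
  (ContDiff.differentiable hf (by simp) q).hasFDerivAt

lemma Smo.ht' (hf : Smo f) (t a b : ℝ) : HasDerivAt (fun s => f s a b)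
    (fderiv ℝ (fun q : ℝ × ℝ × ℝ => f q.1 q.2.1 q.2.2) (t, a, b) (1, 0, 0)) t := by
  have h : HasDerivAt (fun s : ℝ => ((s, a, b) : ℝ × ℝ × ℝ)) (1, 0, 0) t :=
    (hasDerivAt_id t).prodMk ((hasDerivAt_const t a).prodMk (hasDerivAt_const t b))
  exact (hf.hasF (t, a, b)).comp_hasDerivAt t h

lemma Smo.h1' (hf : Smo f) (t a b : ℝ) : HasDerivAt (fun s => f t s b)
    (fderiv ℝ (fun q : ℝ × ℝ × ℝ => f q.1 q.2.1 q.2.2) (t, a, b) (0, 1, 0)) a := by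
  have h : HasDerivAt (fun s : ℝ => ((t, s, b) : ℝ × ℝ × ℝ)) (0, 1, 0) a :=
    (hasDerivAt_const a t).prodMk ((hasDerivAt_id a).prodMk (hasDerivAt_const a b))
  exact (hf.hasF (t, a, b)).comp_hasDerivAt a h

lemma Smo.h2' (hf : Smo f) (t a b : ℝ) : HasDerivAt (fun s => f t a s)
    (fderiv ℝ (fun q : ℝ × ℝ × ℝ => f q.1 q.2.1 q.2.2) (t, a, b) (0, 0, 1)) b := by
  have h : HasDerivAt (fun s : ℝ => ((t, a, s) : ℝ × ℝ × ℝ)) (0, 0, 1) b :=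
    (hasDerivAt_const b t).prodMk ((hasDerivAt_const b a).prodMk (hasDerivAt_id b))
  exact (hf.hasF (t, a, b)).comp_hasDerivAt b h

lemma Smo.ht (hf : Smo f) (t a b : ℝ) : HasDerivAt (fun s => f s a b) (pt2 f t a b) t :=
  (hf.ht' t a b).differentiableAt.hasDerivAt
lemma Smo.h1 (hf : Smo f) (t a b : ℝ) : HasDerivAt (fun s => f t s b) (dz1 f t a b) a :=
  (hf.h1' t a b).differentiableAt.hasDerivAt
lemma Smo.h2 (hf : Smo f) (t a b : ℝ) : HasDerivAt (fun s => f t a s) (dz2 f t a b) b :=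
  (hf.h2' t a b).differentiableAt.hasDerivAt

lemma Smo.et (hf : Smo f) : pt2 f = fun t a b =>
    fderiv ℝ (fun q : ℝ × ℝ × ℝ => f q.1 q.2.1 q.2.2) (t, a, b) (1, 0, 0) := by
  funext t a b; exact (hf.ht' t a b).deriv
lemma Smo.e1 (hf : Smo f) : dz1 f = fun t a b =>
    fderiv ℝ (fun q : ℝ × ℝ × ℝ => f q.1 q.2.1 q.2.2) (t, a, b) (0, 1, 0) := by
  funext t a b; exact (hf.h1' t a b).deriv
lemma Smo.e2 (hf : Smo f) : dz2 f = fun t a b =>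
    fderiv ℝ (fun q : ℝ × ℝ × ℝ => f q.1 q.2.1 q.2.2) (t, a, b) (0, 0, 1) := by
  funext t a b; exact (hf.h2' t a b).deriv

lemma Smo.fd (hf : Smo f) (v : ℝ × ℝ × ℝ) : Smo (fun t a b =>
    fderiv ℝ (fun q : ℝ × ℝ × ℝ => f q.1 q.2.1 q.2.2) (t, a, b) v) := by
  have h : ContDiff ℝ (⊤ : ℕ∞) (fderiv ℝ (fun q : ℝ × ℝ × ℝ => f q.1 q.2.1 q.2.2)) :=
    ContDiff.fderiv_right hf (by simp)
  exact h.clm_apply contDiff_const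

lemma Smo.pt (hf : Smo f) : Smo (pt2 f) := by rw [hf.et]; exact hf.fd _
lemma Smo.d1 (hf : Smo f) : Smo (dz1 f) := by rw [hf.e1]; exact hf.fd _
lemma Smo.d2 (hf : Smo f) : Smo (dz2 f) := by rw [hf.e2]; exact hf.fd _

lemma Smo.fdfd (hf : Smo f) (v w q : ℝ × ℝ × ℝ) :
    fderiv ℝ (fun q : ℝ × ℝ × ℝ =>
      fderiv ℝ (fun q : ℝ × ℝ × ℝ => f q.1 q.2.1 q.2.2) (q.1, q.2.1, q.2.2) v) q w =
    fderiv ℝ (fun q : ℝ × ℝ × ℝ =>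
      fderiv ℝ (fun q : ℝ × ℝ × ℝ => f q.1 q.2.1 q.2.2) (q.1, q.2.1, q.2.2) w) q v := by
  have h : ContDiff ℝ (⊤ : ℕ∞) (fderiv ℝ (fun q : ℝ × ℝ × ℝ => f q.1 q.2.1 q.2.2)) :=
    ContDiff.fderiv_right hf (by simp)
  have h' := (h.differentiable (by simp) q).hasFDerivAt
  have key : ∀ v w, fderiv ℝ (fun q : ℝ × ℝ × ℝ =>
      fderiv ℝ (fun q : ℝ × ℝ × ℝ => f q.1 q.2.1 q.2.2) (q.1, q.2.1, q.2.2) v) q w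
      = fderiv ℝ (fderiv ℝ (fun q : ℝ × ℝ × ℝ => f q.1 q.2.1 q.2.2)) q w v := by
    intro v w
    have := (h'.clm_apply (hasFDerivAt_const v q)).fderiv
    have h3 := congrArg (fun L => L w) this
    simpa using h3
  rw [key, key]
  exact (ContDiffAt.isSymmSndFDerivAt (ContDiff.contDiffAt hf)
    (by simp only [minSmoothness_of_isRCLikeNormedField]; exact WithTop.coe_le_coe.2 (le_top : (2 : ℕ∞) ≤ ⊤))) w v

lemma Smo.c_t1 (hf : Smo f) : pt2 (dz1 f) = dz1 (pt2 f) := by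
  rw [hf.d1.et, hf.pt.e1, hf.et, hf.e1]; funext t a b; exact hf.fdfd _ _ _
lemma Smo.c_t2 (hf : Smo f) : pt2 (dz2 f) = dz2 (pt2 f) := by
  rw [hf.d2.et, hf.pt.e2, hf.et, hf.e2]; funext t a b; exact hf.fdfd _ _ _
lemma Smo.c_12 (hf : Smo f) : dz1 (dz2 f) = dz2 (dz1 f) := by
  rw [hf.d2.e1, hf.d1.e2, hf.e1, hf.e2]; funext t a b; exact hf.fdfd _ _ _

lemma Smo.cont (hf : Smo f) : Continuous (fun q : ℝ × ℝ × ℝ => f q.1 q.2.1 q.2.2) :=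
  ContDiff.continuous hf

end aux

section comp
variable {n : ℕ} {x : ℝ → ℝ → ℝ → Fin n → ℝ}

lemma Smo.co (hx : Smo x) (α : Fin n) : Smo (fun t a b => x t a b α) :=
  contDiff_pi.1 hx α
lemma Smo.co_t (hx : Smo x) (α : Fin n) (t a b : ℝ) :
    pt2 x t a b α = pt2 (fun t a b => x t a b α) t a b :=
  ((hasDerivAt_pi.1 (hx.ht t a b) α).deriv).symm
lemma Smo.co_1 (hx : Smo x) (α : Fin n) :
    (fun t a b => dz1 x t a b α) = dz1 (fun t a b => x t a b α) := by
  funext t a b; exact ((hasDerivAt_pi.1 (hx.h1 t a b) α).deriv).symm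
lemma Smo.co_2 (hx : Smo x) (α : Fin n) :
    (fun t a b => dz2 x t a b α) = dz2 (fun t a b => x t a b α) := by
  funext t a b; exact ((hasDerivAt_pi.1 (hx.h2 t a b) α).deriv).symm

lemma Smo.jet (hx : Smo x) : Smo (jet2 x) := by
  have h1 := hx.d1
  have h2 := hx.d2
  have h11 := hx.d1.d1
  have h12 := hx.d2.d1
  have h22 := hx.d2.d2
  have : ContDiff ℝ (⊤ : ℕ∞) (fun q : ℝ × ℝ × ℝ => q.2.1) := by fun_prop
  have h' : ContDiff ℝ (⊤ : ℕ∞) (fun q : ℝ × ℝ × ℝ => q.2.2) := by fun_prop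
  exact this.prodMk (h'.prodMk (ContDiff.prodMk hx (ContDiff.prodMk h1 (ContDiff.prodMk h2
    (ContDiff.prodMk h11 (ContDiff.prodMk h12 h22))))))

lemma Smo.sl {H : Jet2 n → ℝ} (hH : ContDiff ℝ (⊤ : ℕ∞) H) (hx : Smo x) (v : Jet2 n) :
    Smo (fun t a b => fderiv ℝ H (jet2 x t a b) v) := by
  have h : ContDiff ℝ (⊤ : ℕ∞) (fderiv ℝ H) := ContDiff.fderiv_right hH (by simp)
  exact (ContDiff.comp h hx.jet).clm_apply contDiff_const

lemma lin_sum (M : (Fin n → ℝ) →ₗ[ℝ] ℝ) (v : Fin n → ℝ) :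
    M v = ∑ α, v α * M (Pi.single α 1) := by
  conv_lhs => rw [← Finset.univ_sum_single v]
  rw [map_sum]
  refine Finset.sum_congr rfl fun α _ => ?_
  rw [← smul_eq_mul, ← map_smul]
  congr 1
  ext j
  simp [Pi.single_apply]

lemma lin_sum' (M : (Fin n → ℝ) → ℝ) (h1 : ∀ u v, M (u + v) = M u + M v)
    (h2 : ∀ (c : ℝ) v, M (c • v) = c * M v) (v : Fin n → ℝ) :
    M v = ∑ α, v α * M (Pi.single α 1) :=
  lin_sum { toFun := M, map_add' := h1, map_smul' := h2 } v

lemma lin_jet (L : Jet2 n →L[ℝ] ℝ) (v0 v1 v2 v3 v4 v5 : Fin n → ℝ) :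
    L (0, 0, v0, v1, v2, v3, v4, v5) = ∑ α,
      (v0 α * L (0, 0, Pi.single α 1, 0, 0, 0, 0, 0) + v1 α * L (0, 0, 0, Pi.single α 1, 0, 0, 0, 0)
      + v2 α * L (0, 0, 0, 0, Pi.single α 1, 0, 0, 0) + v3 α * L (0, 0, 0, 0, 0, Pi.single α 1, 0, 0)
      + v4 α * L (0, 0, 0, 0, 0, 0, Pi.single α 1, 0)
      + v5 α * L (0, 0, 0, 0, 0, 0, 0, Pi.single α 1)) := by
  have e : ((0, 0, v0, v1, v2, v3, v4, v5) : Jet2 n) = (0, 0, v0, 0, 0, 0, 0, 0)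
    + (0, 0, 0, v1, 0, 0, 0, 0) + (0, 0, 0, 0, v2, 0, 0, 0) + (0, 0, 0, 0, 0, v3, 0, 0)
    + (0, 0, 0, 0, 0, 0, v4, 0) + (0, 0, 0, 0, 0, 0, 0, v5) := by simp
  rw [e]
  simp only [map_add, Finset.sum_add_distrib]
  congr 1
  · congr 1
    · congr 1
      · congr 1
        · congr 1
          · refine lin_sum' (fun v => L (0, 0, v, 0, 0, 0, 0, 0)) ?_ ?_ v0
            · intro u v; rw [← map_add]; simp
            · intro c v; rw [← smul_eq_mul, ← map_smul]; simp
          · refine lin_sum' (fun v => L (0, 0, 0, v, 0, 0, 0, 0)) ?_ ?_ v1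
            · intro u v; rw [← map_add]; simp
            · intro c v; rw [← smul_eq_mul, ← map_smul]; simp
        · refine lin_sum' (fun v => L (0, 0, 0, 0, v, 0, 0, 0)) ?_ ?_ v2
          · intro u v; rw [← map_add]; simp
          · intro c v; rw [← smul_eq_mul, ← map_smul]; simp
      · refine lin_sum' (fun v => L (0, 0, 0, 0, 0, v, 0, 0)) ?_ ?_ v3
        · intro u v; rw [← map_add]; simp
        · intro c v; rw [← smul_eq_mul, ← map_smul]; simp
    · refine lin_sum' (fun v => L (0, 0, 0, 0, 0, 0, v, 0)) ?_ ?_ v4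
      · intro u v; rw [← map_add]; simp
      · intro c v; rw [← smul_eq_mul, ← map_smul]; simp
  · refine lin_sum' (fun v => L (0, 0, 0, 0, 0, 0, 0, v)) ?_ ?_ v5
    · intro u v; rw [← map_add]; simp
    · intro c v; rw [← smul_eq_mul, ← map_smul]; simp

end comp

lemma param_deriv (L : ℝ) (g g' : ℝ → ℝ → ℝ) (hg : Continuous (Function.uncurry g))
    (hg' : Continuous (Function.uncurry g')) (hd : ∀ t a, HasDerivAt (fun s => g s a) (g' t a) t)
    (t : ℝ) : HasDerivAt (fun τ => ∫ a in (0:ℝ)..L, g τ a) (∫ a in (0:ℝ)..L, g' t a) t := by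
  obtain ⟨C, hC⟩ := ((isCompact_closedBall t 1).prod (isCompact_uIcc (a := (0:ℝ)) (b := L))
    ).exists_bound_of_continuousOn hg'.continuousOn
  refine (intervalIntegral.hasDerivAt_integral_of_dominated_loc_of_deriv_le
    (F := g) (F' := g') (bound := fun _ => C)
    (Metric.closedBall_mem_nhds t one_pos) ?_ ?_ ?_ ?_ ?_ ?_).2
  · exact Filter.Eventually.of_forall fun s =>
      (hg.comp (Continuous.prodMk_right s)).aestronglyMeasurable
  · exact (hg.comp (Continuous.prodMk_right t)).intervalIntegrable _ _
  · exact (hg'.comp (Continuous.prodMk_right t)).aestronglyMeasurable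
  · exact Filter.Eventually.of_forall fun a ha s hs =>
      hC (s, a) ⟨hs, Set.uIoc_subset_uIcc ha⟩
  · exact intervalIntegrable_const
  · exact Filter.Eventually.of_forall fun a _ s _ => hd s a

lemma Smo.deriv_int {f : ℝ → ℝ → ℝ → ℝ} (hf : Smo f) (L1 L2 t : ℝ) :
    HasDerivAt (fun τ => ∫ a in (0:ℝ)..L1, ∫ b in (0:ℝ)..L2, f τ a b)
      (∫ a in (0:ℝ)..L1, ∫ b in (0:ℝ)..L2, pt2 f t a b) t := by
  have hc : ∀ {f : ℝ → ℝ → ℝ → ℝ}, Smo f →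
      Continuous (Function.uncurry fun τ a => ∫ b in (0:ℝ)..L2, f τ a b) := by
    intro f hf
    refine intervalIntegral.continuous_parametric_intervalIntegral_of_continuous'
      (f := fun (p : ℝ × ℝ) b => f p.1 p.2 b) ?_ _ _
    exact hf.cont.comp (f := fun p : (ℝ × ℝ) × ℝ => (p.1.1, p.1.2, p.2)) (by fun_prop)
  refine param_deriv L1 _ _ (hc hf) (hc hf.pt) (fun s a => ?_) t
  refine param_deriv L2 (fun s b => f s a b) (fun s b => pt2 f s a b) ?_ ?_
    (fun t b => hf.ht t a b) s
  · exact hf.cont.comp (f := fun p : ℝ × ℝ => (p.1, a, p.2)) (by fun_prop)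
  · exact hf.pt.cont.comp (f := fun p : ℝ × ℝ => (p.1, a, p.2)) (by fun_prop)

section ints
variable {f : ℝ → ℝ → ℝ → ℝ}
lemma Smo.cab (hf : Smo f) (t : ℝ) : Continuous (Function.uncurry (f t)) :=
  hf.cont.comp (f := fun p : ℝ × ℝ => (t, p.1, p.2)) (by fun_prop)
lemma Smo.ca (hf : Smo f) (t b : ℝ) : Continuous (fun a => f t a b) :=
  hf.cont.comp (f := fun a : ℝ => (t, a, b)) (by fun_prop)
lemma Smo.cb (hf : Smo f) (t a : ℝ) : Continuous (fun b => f t a b) :=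
  hf.cont.comp (f := fun b : ℝ => (t, a, b)) (by fun_prop)

lemma Smo.ftc1 (hf : Smo f) (t b L : ℝ) :
    ∫ a in (0:ℝ)..L, dz1 f t a b = f t L b - f t 0 b :=
  intervalIntegral.integral_eq_sub_of_hasDerivAt (fun a _ => hf.h1 t a b)
    ((hf.d1.ca t b).intervalIntegrable _ _)
lemma Smo.ftc2 (hf : Smo f) (t a L : ℝ) :
    ∫ b in (0:ℝ)..L, dz2 f t a b = f t a L - f t a 0 :=
  intervalIntegral.integral_eq_sub_of_hasDerivAt (fun b _ => hf.h2 t a b)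
    ((hf.d2.cb t a).intervalIntegrable _ _)

lemma Smo.int1 (hf : Smo f) (t L1 L2 : ℝ) :
    ∫ a in (0:ℝ)..L1, ∫ b in (0:ℝ)..L2, dz1 f t a b
      = ∫ b in (0:ℝ)..L2, (f t L1 b - f t 0 b) := by
  rw [MeasureTheory.intervalIntegral_intervalIntegral_swap]
  · simp_rw [hf.ftc1]
  · refine ((hf.d1.cab t).continuousOn.integrableOn_compact
      ((isCompact_uIcc (a := (0:ℝ)) (b := L1)).prod (isCompact_uIcc (a := (0:ℝ)) (b := L2)))).mono_set
      (Set.prod_mono Set.uIoc_subset_uIcc Set.uIoc_subset_uIcc)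

lemma Smo.int12 (hf : Smo f) (t L1 L2 : ℝ) :
    ∫ a in (0:ℝ)..L1, ∫ b in (0:ℝ)..L2, dz1 (dz2 f) t a b
      = (f t L1 L2 - f t 0 L2) - (f t L1 0 - f t 0 0) := by
  rw [hf.c_12]
  simp_rw [hf.d1.ftc2]
  rw [intervalIntegral.integral_sub ((hf.d1.ca t _).intervalIntegrable _ _)
    ((hf.d1.ca t _).intervalIntegrable _ _), hf.ftc1, hf.ftc1]

lemma Smo.int_add {g : ℝ → ℝ → ℝ → ℝ} (hf : Smo f) (hg : Smo g) (t L1 L2 : ℝ) :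
    ∫ a in (0:ℝ)..L1, ∫ b in (0:ℝ)..L2, (f t a b + g t a b)
      = (∫ a in (0:ℝ)..L1, ∫ b in (0:ℝ)..L2, f t a b)
        + ∫ a in (0:ℝ)..L1, ∫ b in (0:ℝ)..L2, g t a b := by
  have hi : ∀ {f : ℝ → ℝ → ℝ → ℝ}, Smo f →
      Continuous (fun a => ∫ b in (0:ℝ)..L2, f t a b) := fun hf =>
    intervalIntegral.continuous_parametric_intervalIntegral_of_continuous' (hf.cab t) _ _
  rw [← intervalIntegral.integral_add ((hi hf).intervalIntegrable _ _)
    ((hi hg).intervalIntegrable _ _)]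
  congr 1
  funext a
  exact intervalIntegral.integral_add ((hf.cb t a).intervalIntegrable _ _)
    ((hg.cb t a).intervalIntegrable _ _)

end ints

section alg
variable {f g : ℝ → ℝ → ℝ → ℝ}
lemma Smo.add (hf : Smo f) (hg : Smo g) : Smo (fun t a b => f t a b + g t a b) :=
  ContDiff.add hf hg
lemma Smo.sub (hf : Smo f) (hg : Smo g) : Smo (fun t a b => f t a b - g t a b) :=
  ContDiff.sub hf hg
lemma Smo.mul (hf : Smo f) (hg : Smo g) : Smo (fun t a b => f t a b * g t a b) :=
  ContDiff.mul hf hg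
lemma Smo.sum {n : ℕ} {f : Fin n → ℝ → ℝ → ℝ → ℝ} (hf : ∀ α, Smo (f α)) :
    Smo (fun t a b => ∑ α, f α t a b) :=
  ContDiff.sum fun α _ => hf α
end alg

section main
variable {n : ℕ} {x : ℝ → ℝ → ℝ → Fin n → ℝ} {H : Jet2 n → ℝ}

lemma pt_jet (hH : ContDiff ℝ (⊤ : ℕ∞) H) (hx : Smo x) (t a b : ℝ) :
    pt2 (fun t a b => H (jet2 x t a b)) t a b = ∑ α,
      (pt2 x t a b α * sl00 H x α t a b + pt2 (dz1 x) t a b α * sl10 H x α t a b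
      + pt2 (dz2 x) t a b α * sl01 H x α t a b + pt2 (dz1 (dz1 x)) t a b α * sl20 H x α t a b
      + pt2 (dz1 (dz2 x)) t a b α * sl11 H x α t a b
      + pt2 (dz2 (dz2 x)) t a b α * sl02 H x α t a b) := by
  have h : HasDerivAt (fun s => jet2 x s a b) (0, 0, pt2 x t a b, pt2 (dz1 x) t a b,
      pt2 (dz2 x) t a b, pt2 (dz1 (dz1 x)) t a b, pt2 (dz1 (dz2 x)) t a b,
      pt2 (dz2 (dz2 x)) t a b) t :=
    (hasDerivAt_const t a).prodMk ((hasDerivAt_const t b).prodMk ((hx.ht t a b).prodMk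
      ((hx.d1.ht t a b).prodMk ((hx.d2.ht t a b).prodMk ((hx.d1.d1.ht t a b).prodMk
      ((hx.d2.d1.ht t a b).prodMk (hx.d2.d2.ht t a b)))))))
  have h2 := ((hH.differentiable (by simp) (jet2 x t a b)).hasFDerivAt).comp_hasDerivAt t h
  have h3 := h2.deriv
  rw [lin_jet] at h3
  exact h3

lemma pointwise (hH : ContDiff ℝ (⊤ : ℕ∞) H) (hx : Smo x) (t a b : ℝ) :
    pt2 (fun t a b => H (jet2 x t a b)) t a b =
      (∑ α : Fin n, pt2 x t a b α * varDer2 H x α t a b)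
      + dz1 (edge1 H x) t a b + dz2 (edge2 H x) t a b + dz1 (dz2 (corner2 H x)) t a b := by
  have hy : ∀ α, Smo (pt2 (fun t a b => x t a b α)) := fun α => (hx.co α).pt
  have s10 : ∀ α, Smo (sl10 H x α) := fun α => hx.sl hH _
  have s01 : ∀ α, Smo (sl01 H x α) := fun α => hx.sl hH _
  have s20 : ∀ α, Smo (sl20 H x α) := fun α => hx.sl hH _
  have s11 : ∀ α, Smo (sl11 H x α) := fun α => hx.sl hH _
  have s02 : ∀ α, Smo (sl02 H x α) := fun α => hx.sl hH _
  have y0 : ∀ α t a b, pt2 x t a b α = pt2 (fun t a b => x t a b α) t a b :=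
    fun α t a b => hx.co_t α t a b
  have y1 : ∀ α t a b, pt2 (dz1 x) t a b α = dz1 (pt2 (fun t a b => x t a b α)) t a b := by
    intro α t a b
    rw [hx.d1.co_t, hx.co_1, (hx.co α).c_t1]
  have y2 : ∀ α t a b, pt2 (dz2 x) t a b α = dz2 (pt2 (fun t a b => x t a b α)) t a b := by
    intro α t a b
    rw [hx.d2.co_t, hx.co_2, (hx.co α).c_t2]
  have y11 : ∀ α t a b, pt2 (dz1 (dz1 x)) t a b α
      = dz1 (dz1 (pt2 (fun t a b => x t a b α))) t a b := by
    intro α t a b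
    rw [hx.d1.d1.co_t, hx.d1.co_1, hx.co_1, (hx.co α).d1.c_t1, (hx.co α).c_t1]
  have y12 : ∀ α t a b, pt2 (dz1 (dz2 x)) t a b α
      = dz1 (dz2 (pt2 (fun t a b => x t a b α))) t a b := by
    intro α t a b
    rw [hx.d2.d1.co_t, hx.d2.co_1, hx.co_2, (hx.co α).d2.c_t1, (hx.co α).c_t2]
  have y22 : ∀ α t a b, pt2 (dz2 (dz2 x)) t a b α
      = dz2 (dz2 (pt2 (fun t a b => x t a b α))) t a b := by
    intro α t a b
    rw [hx.d2.d2.co_t, hx.d2.co_2, hx.co_2, (hx.co α).d2.c_t2, (hx.co α).c_t2]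
  rw [pt_jet hH hx]
  unfold varDer2 edge1 edge2 corner2
  simp only [y0, y1, y2, y11, y12, y22]
  generalize hY : (fun α => pt2 (fun t a b => x t a b α)) = Y at *
  have hY' : ∀ α, pt2 (fun t a b => x t a b α) = Y α := fun α => congrFun hY α
  simp only [hY'] at *
  have E1 := (HasDerivAt.fun_sum (u := Finset.univ) fun α _ =>
    ((((hy α).h1 t a b).mul ((((s10 α).h1 t a b).sub ((s20 α).d1.h1 t a b)).sub
      ((s11 α).d2.h1 t a b))).add (((hy α).d1.h1 t a b).mul ((s20 α).h1 t a b)))).deriv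
  have E2 := (HasDerivAt.fun_sum (u := Finset.univ) fun α _ =>
    ((((hy α).h2 t a b).mul ((((s01 α).h2 t a b).sub ((s02 α).d2.h2 t a b)).sub
      ((s11 α).d1.h2 t a b))).add (((hy α).d2.h2 t a b).mul ((s02 α).h2 t a b)))).deriv
  have C2 : dz2 (fun t a b => ∑ α, Y α t a b * sl11 H x α t a b) = fun t a b =>
      ∑ α, (dz2 (Y α) t a b * sl11 H x α t a b + Y α t a b * dz2 (sl11 H x α) t a b) := by
    funext t a b
    exact (HasDerivAt.fun_sum (u := Finset.univ) fun α _ =>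
      ((hy α).h2 t a b).mul ((s11 α).h2 t a b)).deriv
  have E3 := (HasDerivAt.fun_sum (u := Finset.univ) fun α _ =>
    (((hy α).d2.h1 t a b).mul ((s11 α).h1 t a b)).add
      (((hy α).h1 t a b).mul ((s11 α).d2.h1 t a b))).deriv
  rw [C2]
  refine Eq.trans ?_ (congrArg₂ (· + ·) (congrArg₂ (· + ·) (congrArg₂ (· + ·) rfl E1.symm) E2.symm)
    E3.symm)
  simp only [← Finset.sum_add_distrib]
  refine Finset.sum_congr rfl fun α _ => ?_
  simp only [Pi.sub_apply, (s11 α).c_12]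
  ring

end main

/-- decomposition of the formal change of a second-order Hamiltonian
functional on the rectangle `B = [0,L₁] × [0,L₂]`. -/
theorem statement1 {n : ℕ} (hn : 1 ≤ n) (L1 L2 : ℝ) (hL1 : 0 < L1) (hL2 : 0 < L2)
    (H : Jet2 n → ℝ) (hH : ContDiff ℝ (⊤ : ℕ∞) H)
    (x : ℝ → ℝ → ℝ → Fin n → ℝ)
    (hx : ContDiff ℝ (⊤ : ℕ∞) (fun q : ℝ × ℝ × ℝ => x q.1 q.2.1 q.2.2)) (t : ℝ) :
    HasDerivAt (fun τ => ∫ a in (0:ℝ)..L1, ∫ b in (0:ℝ)..L2, H (jet2 x τ a b))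
      ((∫ a in (0:ℝ)..L1, ∫ b in (0:ℝ)..L2,
          ∑ α : Fin n, pt2 x t a b α * varDer2 H x α t a b)
        + (∫ b in (0:ℝ)..L2, (edge1 H x t L1 b - edge1 H x t 0 b))
        + (∫ a in (0:ℝ)..L1, (edge2 H x t a L2 - edge2 H x t a 0))
        + ((corner2 H x t L1 L2 - corner2 H x t 0 L2)
            - (corner2 H x t L1 0 - corner2 H x t 0 0))) t := by
  have hx' : Smo x := hx
  have hF : Smo (fun t a b => H (jet2 x t a b)) := ContDiff.comp hH hx'.jet
  have hy : ∀ α, Smo (fun t a b => pt2 x t a b α) := fun α => hx'.pt.co α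
  have s00 : ∀ α, Smo (sl00 H x α) := fun α => hx'.sl hH _
  have s10 : ∀ α, Smo (sl10 H x α) := fun α => hx'.sl hH _
  have s01 : ∀ α, Smo (sl01 H x α) := fun α => hx'.sl hH _
  have s20 : ∀ α, Smo (sl20 H x α) := fun α => hx'.sl hH _
  have s11 : ∀ α, Smo (sl11 H x α) := fun α => hx'.sl hH _
  have s02 : ∀ α, Smo (sl02 H x α) := fun α => hx'.sl hH _
  have e1 : Smo (edge1 H x) := Smo.sum fun α =>
    ((hy α).mul (((s10 α).sub (s20 α).d1).sub (s11 α).d2)).add ((hx'.d1.pt.co α).mul (s20 α))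
  have e2 : Smo (edge2 H x) := Smo.sum fun α =>
    ((hy α).mul (((s01 α).sub (s02 α).d2).sub (s11 α).d1)).add ((hx'.d2.pt.co α).mul (s02 α))
  have c2 : Smo (corner2 H x) := Smo.sum fun α => (hy α).mul (s11 α)
  have v : Smo (fun t a b => ∑ α : Fin n, pt2 x t a b α * varDer2 H x α t a b) :=
    Smo.sum fun α => (hy α).mul ((((((s00 α).sub (s10 α).d1).sub (s01 α).d2).add
      (s20 α).d1.d1).add (s11 α).d2.d1).add (s02 α).d2.d2)
  have key := hF.deriv_int L1 L2 t
  simp only [pointwise hH hx'] at key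
  rw [((v.add e1.d1).add e2.d2).int_add c2.d2.d1, (v.add e1.d1).int_add e2.d2,
    v.int_add e1.d1, e1.int1, c2.int12] at key
  simp only [e2.ftc2] at key
  exact key
end

section
/- (Casimir conditions, 1-dimensional spatial domain.) Consider the closed loop of the plant $\dot{x}^\alpha = (\mathcal{J}^{\alpha\beta}-\mathcal{R}^{\alpha\beta})\delta_\beta\mathcal{H}[x] + \mathcal{G}^\alpha_\xi u^\xi$, $y_\xi = \mathcal{G}^\alpha_\xi\delta_\alpha\mathcal{H}[x]$ on $[0,L]$ (smooth data, second-order density $\mathcal{H}$) and the finite-dimensional controller $\dot{x}_c^{\alpha_c} = (J_c^{\alpha_c\beta_c}-R_c^{\alpha_c\beta_c})\partial_{\beta_c}H_c(x_c) + G^{\alpha_c}_{c,\xi}u_c^\xi$, $y_{c,\xi} = G^{\beta_c}_{c,\xi}\partial_{\beta_c}H_c(x_c)$, interconnected by $u_c^\xi = K^{\xi\eta}\int_0^L y_\eta\,dz$, $u^\xi = -K^{\xi\eta}y_{c,\eta}$ with a constant matrix $K$. Fix $\lambda\in\{1,\dots,n_c\}$ and let $\mathcal{C}$ be a smooth second-order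 density. Assume, for all $t$ and all $z \in [0,L]$: (a) $J_c^{\lambda\beta_c}-R_c^{\lambda\beta_c}=0$ for all $\beta_c$; (b) $\delta_\alpha\mathcal{C}[x]\,(\mathcal{J}^{\alpha\beta}-\mathcal{R}^{\alpha\beta}) + G^\lambda_{c,\xi}K^{\xi\eta}\mathcal{G}^\beta_\eta = 0$ for all $\beta$; (c) $\delta_\alpha\mathcal{C}[x]\,\mathcal{G}^\alpha_\xi K^{\xi\eta}G^{\alpha_c}_{c,\eta} = 0$ for all $\alpha_c$; (d) $\dot{x}^\alpha\,\delta^{\partial,1}_\alpha\mathcal{C}[x] + \dot{x}^\alpha_{[1]}\,\delta^{\partial,2}_\alpha\mathcal{C}[x] = 0$ at $z=0$ and $z=L$. Then $\mathscr{C}(t) = x_c^\lambda(t) + \int_0^L\mathcal{C}[x](t,z)\,dz$ is constant in $t$ along the closed-loop solution. -/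
open MeasureTheory

/-- Time derivative of a field `f(t,z)`. -/
noncomputable def pT {E : Type*} [NormedAddCommGroup E] [NormedSpace ℝ E]
    (f : ℝ → ℝ → E) : ℝ → ℝ → E := fun t z => deriv (fun s => f s z) t

/-- Spatial derivative of a field `f(t,z)`. -/
noncomputable def pZ {E : Type*} [NormedAddCommGroup E] [NormedSpace ℝ E]
    (f : ℝ → ℝ → E) : ℝ → ℝ → E := fun t z => deriv (fun s => f t s) z

/-- Second order jet `(z, x, x_[1], x_[2])` of the field `x`. -/
noncomputable def jet1 {n : ℕ} (x : ℝ → ℝ → Fin n → ℝ) (t z : ℝ) :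
    ℝ × (Fin n → ℝ) × (Fin n → ℝ) × (Fin n → ℝ) :=
  (z, x t z, pZ x t z, pZ (pZ x) t z)

/-- Composed partial derivative `(∂H/∂x^α)[x]`. -/
noncomputable def sX {n : ℕ}
    (H : ℝ × (Fin n → ℝ) × (Fin n → ℝ) × (Fin n → ℝ) → ℝ)
    (x : ℝ → ℝ → Fin n → ℝ) (α : Fin n) : ℝ → ℝ → ℝ :=
  fun t z => fderiv ℝ H (jet1 x t z) (0, Pi.single α 1, 0, 0)

/-- Composed partial derivative `(∂H/∂x_1^α)[x]`. -/
noncomputable def sX1 {n : ℕ}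
    (H : ℝ × (Fin n → ℝ) × (Fin n → ℝ) × (Fin n → ℝ) → ℝ)
    (x : ℝ → ℝ → Fin n → ℝ) (α : Fin n) : ℝ → ℝ → ℝ :=
  fun t z => fderiv ℝ H (jet1 x t z) (0, 0, Pi.single α 1, 0)

/-- Composed partial derivative `(∂H/∂x_2^α)[x]`. -/
noncomputable def sX2 {n : ℕ}
    (H : ℝ × (Fin n → ℝ) × (Fin n → ℝ) × (Fin n → ℝ) → ℝ)
    (x : ℝ → ℝ → Fin n → ℝ) (α : Fin n) : ℝ → ℝ → ℝ :=
  fun t z => fderiv ℝ H (jet1 x t z) (0, 0, 0, Pi.single α 1)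

/-- Variational derivative `δ_α H[x]`. -/
noncomputable def varDer1 {n : ℕ}
    (H : ℝ × (Fin n → ℝ) × (Fin n → ℝ) × (Fin n → ℝ) → ℝ)
    (x : ℝ → ℝ → Fin n → ℝ) (α : Fin n) : ℝ → ℝ → ℝ :=
  fun t z => sX H x α t z - pZ (sX1 H x α) t z + pZ (pZ (sX2 H x α)) t z

/-- First boundary operator `δ^{∂,1}_α H[x]`. -/
noncomputable def bd1 {n : ℕ}
    (H : ℝ × (Fin n → ℝ) × (Fin n → ℝ) × (Fin n → ℝ) → ℝ)
    (x : ℝ → ℝ → Fin n → ℝ) (α : Fin n) : ℝ → ℝ → ℝ :=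
  fun t z => sX1 H x α t z - pZ (sX2 H x α) t z

/-- Second boundary operator `δ^{∂,2}_α H[x]`. -/
noncomputable def bd2 {n : ℕ}
    (H : ℝ × (Fin n → ℝ) × (Fin n → ℝ) × (Fin n → ℝ) → ℝ)
    (x : ℝ → ℝ → Fin n → ℝ) (α : Fin n) : ℝ → ℝ → ℝ :=
  fun t z => sX2 H x α t z

/-- Gradient component `∂_{β_c} H_c (x_c(t))` of the controller Hamiltonian. -/
noncomputable def gradC {nc : ℕ} (Hc : (Fin nc → ℝ) → ℝ) (xc : ℝ → Fin nc → ℝ)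
    (βc : Fin nc) (t : ℝ) : ℝ :=
  fderiv ℝ Hc (xc t) (Pi.single βc 1)

/-- Joint smoothness of a field. -/
def SmF {E : Type*} [NormedAddCommGroup E] [NormedSpace ℝ E] (f : ℝ → ℝ → E) : Prop :=
  ContDiff ℝ (⊤ : ℕ∞) (fun q : ℝ × ℝ => f q.1 q.2)

section helpers
variable {E : Type*} [NormedAddCommGroup E] [NormedSpace ℝ E]

theorem SmF.diff {f : ℝ → ℝ → E} (hf : SmF f) :
    Differentiable ℝ (fun q : ℝ × ℝ => f q.1 q.2) :=
  ContDiff.differentiable hf (by simp)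

theorem SmF.hT' {f : ℝ → ℝ → E} (hf : SmF f) (t z : ℝ) :
    HasDerivAt (fun s => f s z) (fderiv ℝ (fun q : ℝ × ℝ => f q.1 q.2) (t, z) (1, 0)) t := by
  have h1 : HasDerivAt (fun s : ℝ => (s, z)) ((1 : ℝ), (0 : ℝ)) t :=
    (hasDerivAt_id t).prodMk (hasDerivAt_const t z)
  exact (hf.diff (t, z)).hasFDerivAt.comp_hasDerivAt t h1

theorem SmF.hZ' {f : ℝ → ℝ → E} (hf : SmF f) (t z : ℝ) :
    HasDerivAt (fun s => f t s) (fderiv ℝ (fun q : ℝ × ℝ => f q.1 q.2) (t, z) (0, 1)) z := by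
  have h1 : HasDerivAt (fun s : ℝ => (t, s)) ((0 : ℝ), (1 : ℝ)) z :=
    (hasDerivAt_const z t).prodMk (hasDerivAt_id z)
  exact (hf.diff (t, z)).hasFDerivAt.comp_hasDerivAt z h1

theorem SmF.pT_eq {f : ℝ → ℝ → E} (hf : SmF f) (t z : ℝ) :
    pT f t z = fderiv ℝ (fun q : ℝ × ℝ => f q.1 q.2) (t, z) (1, 0) := (hf.hT' t z).deriv

theorem SmF.pZ_eq {f : ℝ → ℝ → E} (hf : SmF f) (t z : ℝ) :
    pZ f t z = fderiv ℝ (fun q : ℝ × ℝ => f q.1 q.2) (t, z) (0, 1) := (hf.hZ' t z).deriv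

theorem SmF.hT {f : ℝ → ℝ → E} (hf : SmF f) (t z : ℝ) :
    HasDerivAt (fun s => f s z) (pT f t z) t := by
  rw [hf.pT_eq]; exact hf.hT' t z

theorem SmF.hZ {f : ℝ → ℝ → E} (hf : SmF f) (t z : ℝ) :
    HasDerivAt (fun s => f t s) (pZ f t z) z := by
  rw [hf.pZ_eq]; exact hf.hZ' t z

theorem SmF.fd {f : ℝ → ℝ → E} (hf : SmF f) :
    ContDiff ℝ (⊤ : ℕ∞) (fderiv ℝ (fun q : ℝ × ℝ => f q.1 q.2)) :=
  ContDiff.fderiv_right hf (by simp)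

theorem SmF.pT {f : ℝ → ℝ → E} (hf : SmF f) : SmF (pT f) := by
  have : (fun q : ℝ × ℝ => _root_.pT f q.1 q.2) =
      fun q => fderiv ℝ (fun q : ℝ × ℝ => f q.1 q.2) q (1, 0) := by
    funext q; exact hf.pT_eq q.1 q.2
  unfold SmF; rw [this]
  exact hf.fd.clm_apply contDiff_const

theorem SmF.pZ {f : ℝ → ℝ → E} (hf : SmF f) : SmF (pZ f) := by
  have : (fun q : ℝ × ℝ => _root_.pZ f q.1 q.2) =
      fun q => fderiv ℝ (fun q : ℝ × ℝ => f q.1 q.2) q (0, 1) := by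
    funext q; exact hf.pZ_eq q.1 q.2
  unfold SmF; rw [this]
  exact hf.fd.clm_apply contDiff_const

theorem SmF.swap {f : ℝ → ℝ → E} (hf : SmF f) : _root_.pT (_root_.pZ f) = _root_.pZ (_root_.pT f) := by
  funext t z
  rw [hf.pZ.pT_eq, hf.pT.pZ_eq]
  have e1 : (fun q : ℝ × ℝ => _root_.pT f q.1 q.2) =
      fun q => fderiv ℝ (fun q : ℝ × ℝ => f q.1 q.2) q (1, 0) := by
    funext q; exact hf.pT_eq q.1 q.2
  have e2 : (fun q : ℝ × ℝ => _root_.pZ f q.1 q.2) =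
      fun q => fderiv ℝ (fun q : ℝ × ℝ => f q.1 q.2) q (0, 1) := by
    funext q; exact hf.pZ_eq q.1 q.2
  have hd : DifferentiableAt ℝ (fderiv ℝ (fun q : ℝ × ℝ => f q.1 q.2)) (t, z) :=
    (hf.fd.differentiable (by simp)) _
  have key : ∀ v w : ℝ × ℝ, fderiv ℝ (fun q => fderiv ℝ (fun q : ℝ × ℝ => f q.1 q.2) q v) (t, z) w
      = fderiv ℝ (fderiv ℝ (fun q : ℝ × ℝ => f q.1 q.2)) (t, z) w v := by
    intro v w
    have := (hd.hasFDerivAt.clm_apply (hasFDerivAt_const v (t, z))).fderiv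
    rw [this]; simp
  rw [e1, e2, key, key]
  have hs : IsSymmSndFDerivAt ℝ (fun q : ℝ × ℝ => f q.1 q.2) (t, z) :=
    (ContDiff.contDiffAt hf).isSymmSndFDerivAt (by simp; exact WithTop.coe_le_coe.mpr le_top)
  exact hs.eq _ _

theorem SmF.contZ {f : ℝ → ℝ → E} (hf : SmF f) (t : ℝ) : Continuous (fun z => f t z) :=
  (ContDiff.continuous hf).comp (by fun_prop : Continuous fun z : ℝ => (t, z))

/-- Leibniz rule. -/
theorem SmF.leibniz {f : ℝ → ℝ → ℝ} (hf : SmF f) (L t : ℝ) :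
    HasDerivAt (fun s => ∫ z in (0:ℝ)..L, f s z) (∫ z in (0:ℝ)..L, _root_.pT f t z) t := by
  have hK : IsCompact (Metric.closedBall t 1 ×ˢ Set.uIcc (0:ℝ) L) :=
    (isCompact_closedBall t 1).prod isCompact_uIcc
  obtain ⟨M, hM⟩ := hK.exists_bound_of_continuousOn (ContDiff.continuous hf.pT).continuousOn
  refine (intervalIntegral.hasDerivAt_integral_of_dominated_loc_of_deriv_le
    (F := f) (F' := _root_.pT f) (bound := fun _ => M) (s := Metric.closedBall t 1)
    (Metric.closedBall_mem_nhds t one_pos) ?_ ?_ ?_ ?_ ?_ ?_).2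
  · exact Filter.Eventually.of_forall fun s => (hf.contZ s).aestronglyMeasurable
  · exact (hf.contZ t).intervalIntegrable _ _
  · exact (hf.pT.contZ t).aestronglyMeasurable
  · exact Filter.Eventually.of_forall fun z hz s hs =>
      hM (s, z) ⟨hs, Set.uIoc_subset_uIcc hz⟩
  · exact intervalIntegrable_const
  · exact Filter.Eventually.of_forall fun z hz s hs => hf.hT s z

end helpers

section jets
variable {n : ℕ} {x : ℝ → ℝ → Fin n → ℝ}
  {C : ℝ × (Fin n → ℝ) × (Fin n → ℝ) × (Fin n → ℝ) → ℝ}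

theorem SmF.jet (hx : SmF x) : SmF (jet1 x) :=
  ContDiff.prodMk contDiff_snd (ContDiff.prodMk hx (ContDiff.prodMk hx.pZ hx.pZ.pZ))

theorem SmF.fdC (hx : SmF x) (hC : ContDiff ℝ (⊤ : ℕ∞) C) (v) :
    SmF (fun t z => fderiv ℝ C (jet1 x t z) v) :=
  ((ContDiff.fderiv_right hC (by simp)).comp hx.jet).clm_apply contDiff_const

theorem SmF.sX (hx : SmF x) (hC : ContDiff ℝ (⊤ : ℕ∞) C) (α) : SmF (sX C x α) := hx.fdC hC _
theorem SmF.sX1 (hx : SmF x) (hC : ContDiff ℝ (⊤ : ℕ∞) C) (α) : SmF (sX1 C x α) := hx.fdC hC _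
theorem SmF.sX2 (hx : SmF x) (hC : ContDiff ℝ (⊤ : ℕ∞) C) (α) : SmF (sX2 C x α) := hx.fdC hC _

theorem SmF.varDer (hx : SmF x) (hC : ContDiff ℝ (⊤ : ℕ∞) C) (α) : SmF (varDer1 C x α) :=
  ((hx.sX hC α).sub (hx.sX1 hC α).pZ).add (hx.sX2 hC α).pZ.pZ

theorem lin_expand (A : ℝ × (Fin n → ℝ) × (Fin n → ℝ) × (Fin n → ℝ) →L[ℝ] ℝ)
    (a b c : Fin n → ℝ) :
    A (0, a, b, c) = ∑ α, (A (0, Pi.single α 1, 0, 0) * a α + A (0, 0, Pi.single α 1, 0) * b α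
      + A (0, 0, 0, Pi.single α 1) * c α) := by
  have h : ((0 : ℝ), a, b, c) = ∑ α, (a α • ((0 : ℝ), (Pi.single α 1 : Fin n → ℝ), (0 : Fin n → ℝ), (0 : Fin n → ℝ))
      + b α • ((0 : ℝ), (0 : Fin n → ℝ), (Pi.single α 1 : Fin n → ℝ), (0 : Fin n → ℝ))
      + c α • ((0 : ℝ), (0 : Fin n → ℝ), (0 : Fin n → ℝ), (Pi.single α 1 : Fin n → ℝ))) := by
    refine Prod.ext ?_ (Prod.ext ?_ (Prod.ext ?_ ?_))
    · simp [Prod.fst_sum]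
    · funext i; simp [Prod.fst_sum, Prod.snd_sum, Finset.sum_apply, Pi.single_apply]
    · funext i; simp [Prod.fst_sum, Prod.snd_sum, Finset.sum_apply, Pi.single_apply]
    · funext i; simp [Prod.fst_sum, Prod.snd_sum, Finset.sum_apply, Pi.single_apply]
  rw [h, map_sum]
  refine Finset.sum_congr rfl fun α _ => ?_
  simp only [map_add, map_smul, smul_eq_mul]; ring

theorem SmF.pT_C (hx : SmF x) (hC : ContDiff ℝ (⊤ : ℕ∞) C) (t z : ℝ) :
    _root_.pT (fun t z => C (jet1 x t z)) t z =
      ∑ α, (_root_.sX C x α t z * _root_.pT x t z α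
        + _root_.sX1 C x α t z * _root_.pT (_root_.pZ x) t z α
        + _root_.sX2 C x α t z * _root_.pT (_root_.pZ (_root_.pZ x)) t z α) := by
  have h1 : HasDerivAt (fun s => jet1 x s z)
      ((0 : ℝ), _root_.pT x t z, _root_.pT (_root_.pZ x) t z, _root_.pT (_root_.pZ (_root_.pZ x)) t z) t :=
    (hasDerivAt_const t z).prodMk ((hx.hT t z).prodMk ((hx.pZ.hT t z).prodMk (hx.pZ.pZ.hT t z)))
  have h2 := ((hC.differentiable (by simp)) (jet1 x t z)).hasFDerivAt.comp_hasDerivAt t h1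
  have h3 : _root_.pT (fun t z => C (jet1 x t z)) t z = _ := h2.deriv
  rw [h3, lin_expand]; rfl

/-- Integration by parts. -/
theorem SmF.ibp (hx : SmF x) (hC : ContDiff ℝ (⊤ : ℕ∞) C) (t z : ℝ) :
    HasDerivAt (fun z => ∑ α, (_root_.pT x t z α * bd1 C x α t z
        + _root_.pT (_root_.pZ x) t z α * bd2 C x α t z))
      (_root_.pT (fun t z => C (jet1 x t z)) t z - ∑ α, varDer1 C x α t z * _root_.pT x t z α) z := by
  rw [hx.pT_C hC, ← Finset.sum_sub_distrib]
  refine HasDerivAt.fun_sum fun α _ => ?_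
  have a1 := hasDerivAt_pi.1 (hx.pT.hZ t z) α
  have a2 := hasDerivAt_pi.1 (hx.pZ.pT.hZ t z) α
  have b1 := ((hx.sX1 hC α).hZ t z).sub ((hx.sX2 hC α).pZ.hZ t z)
  have b2 := (hx.sX2 hC α).hZ t z
  convert (a1.mul b1).add (a2.mul b2) using 1
  · rfl
  rw [← hx.swap, ← hx.pZ.swap]
  simp only [varDer1, Pi.sub_apply]
  ring

end jets

/-- Casimir conditions, 1-dimensional spatial domain: under the
conditions (a)–(d), the functional `𝒞(t) = x_c^λ(t) + ∫_0^L 𝒞[x] dz` is a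
structural invariant of the closed loop. -/
theorem statement6 {n l nc : ℕ} (L : ℝ) (hL : 0 < L)
    (H : ℝ × (Fin n → ℝ) × (Fin n → ℝ) × (Fin n → ℝ) → ℝ) (hH : ContDiff ℝ (⊤ : ℕ∞) H)
    (x : ℝ → ℝ → Fin n → ℝ)
    (hx : ContDiff ℝ (⊤ : ℕ∞) (fun q : ℝ × ℝ => x q.1 q.2))
    (J R : Fin n → Fin n → ℝ → ℝ → ℝ)
    (G : Fin n → Fin l → ℝ → ℝ → ℝ)
    (hJ : ∀ α β, ContDiff ℝ (⊤ : ℕ∞) (fun q : ℝ × ℝ => J α β q.1 q.2))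
    (hR : ∀ α β, ContDiff ℝ (⊤ : ℕ∞) (fun q : ℝ × ℝ => R α β q.1 q.2))
    (hG : ∀ α ξ, ContDiff ℝ (⊤ : ℕ∞) (fun q : ℝ × ℝ => G α ξ q.1 q.2))
    (u : Fin l → ℝ → ℝ)
    -- the plant dynamics hold on `[0,L]`
    (hdyn : ∀ t, ∀ z ∈ Set.Icc (0:ℝ) L, ∀ α,
      pT x t z α =
        (∑ β : Fin n, (J α β t z - R α β t z) * varDer1 H x β t z)
          + ∑ ξ : Fin l, G α ξ t z * u ξ t)
    -- the finite-dimensional port-Hamiltonian controller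
    (Hc : (Fin nc → ℝ) → ℝ) (hHc : ContDiff ℝ (⊤ : ℕ∞) Hc)
    (Jc Rc : Fin nc → Fin nc → ℝ) (Gc : Fin nc → Fin l → ℝ)
    (xc : ℝ → Fin nc → ℝ)
    (uc : Fin l → ℝ → ℝ)
    (hcdyn : ∀ t αc, HasDerivAt (fun τ => xc τ αc)
      ((∑ βc : Fin nc, (Jc αc βc - Rc αc βc) * gradC Hc xc βc t)
        + ∑ ξ : Fin l, Gc αc ξ * uc ξ t) t)
    -- the interconnection with a constant matrix `K`
    (K : Fin l → Fin l → ℝ)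
    (huc : ∀ ξ t, uc ξ t = ∑ η : Fin l, K ξ η *
      (∫ z in (0:ℝ)..L, ∑ α : Fin n, G α η t z * varDer1 H x α t z))
    (hu : ∀ ξ t, u ξ t = -∑ η : Fin l, K ξ η *
      (∑ βc : Fin nc, Gc βc η * gradC Hc xc βc t))
    -- the Casimir candidate: a smooth second-order density and a controller index
    (lam : Fin nc) (C : ℝ × (Fin n → ℝ) × (Fin n → ℝ) × (Fin n → ℝ) → ℝ)
    (hC : ContDiff ℝ (⊤ : ℕ∞) C)
    -- (a)
    (ha : ∀ βc, Jc lam βc - Rc lam βc = 0)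
    -- (b)
    (hb : ∀ t, ∀ z ∈ Set.Icc (0:ℝ) L, ∀ β,
      (∑ α : Fin n, varDer1 C x α t z * (J α β t z - R α β t z))
        + ∑ ξ : Fin l, ∑ η : Fin l, Gc lam ξ * K ξ η * G β η t z = 0)
    -- (c)
    (hc : ∀ t, ∀ z ∈ Set.Icc (0:ℝ) L, ∀ αc,
      ∑ α : Fin n, ∑ ξ : Fin l, ∑ η : Fin l,
        varDer1 C x α t z * G α ξ t z * K ξ η * Gc αc η = 0)
    -- (d): the boundary contributions of `C` vanish at `z = 0` and `z = L`
    (hd : ∀ t,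
      (∑ α : Fin n, (pT x t 0 α * bd1 C x α t 0 + pT (pZ x) t 0 α * bd2 C x α t 0)) = 0
      ∧ (∑ α : Fin n, (pT x t L α * bd1 C x α t L + pT (pZ x) t L α * bd2 C x α t L)) = 0) :
    ∀ t s : ℝ,
      xc t lam + (∫ z in (0:ℝ)..L, C (jet1 x t z))
        = xc s lam + (∫ z in (0:ℝ)..L, C (jet1 x s z)) := by
  have hx' : SmF x := hx
  have hCS : SmF (fun t z => C (jet1 x t z)) := hC.comp hx'.jet
  -- integral of the variational part
  have hint : ∀ t, ∫ z in (0:ℝ)..L, pT (fun t z => C (jet1 x t z)) t z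
      = ∫ z in (0:ℝ)..L, ∑ α, varDer1 C x α t z * pT x t z α := by
    intro t
    have c1 := hCS.pT.contZ t
    have c2 : Continuous fun z => ∑ α, varDer1 C x α t z * pT x t z α :=
      continuous_finset_sum _ fun α _ =>
        ((hx'.varDer hC α).contZ t).mul ((continuous_apply α).comp (hx'.pT.contZ t))
    have h := intervalIntegral.integral_eq_sub_of_hasDerivAt (a := 0) (b := L)
      (fun z _ => hx'.ibp hC t z) ((c1.sub c2).intervalIntegrable _ _)
    rw [(hd t).1, (hd t).2, intervalIntegral.integral_sub (c1.intervalIntegrable _ _)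
      (c2.intervalIntegrable _ _)] at h
    linarith
  have hpt : ∀ t, ∀ z ∈ Set.Icc (0:ℝ) L, ∑ α, varDer1 C x α t z * pT x t z α
      = -∑ ξ, Gc lam ξ * ∑ η, K ξ η * ∑ β, G β η t z * varDer1 H x β t z := by
    intro t z hz
    have e1 : ∑ α, varDer1 C x α t z * pT x t z α
        = (∑ β, (∑ α, varDer1 C x α t z * (J α β t z - R α β t z)) * varDer1 H x β t z)
          + ∑ α, ∑ ξ, varDer1 C x α t z * G α ξ t z * u ξ t := by
      simp only [Finset.sum_mul]
      rw [Finset.sum_comm, ← Finset.sum_add_distrib]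
      refine Finset.sum_congr rfl fun α _ => ?_
      rw [hdyn t z hz α, mul_add, Finset.mul_sum, Finset.mul_sum]
      simp only [mul_assoc]
    have e2 : ∑ α, ∑ ξ, varDer1 C x α t z * G α ξ t z * u ξ t = 0 := by
      have : ∑ α, ∑ ξ, varDer1 C x α t z * G α ξ t z * u ξ t
          = -∑ βc, gradC Hc xc βc t * ∑ α : Fin n, ∑ ξ : Fin l, ∑ η : Fin l,
              varDer1 C x α t z * G α ξ t z * K ξ η * Gc βc η := by
        simp only [Finset.mul_sum, hu, mul_neg, Finset.sum_neg_distrib]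
        congr 1
        rw [Finset.sum_comm' (t' := Finset.univ) (s' := fun _ => Finset.univ) (by simp)]
        rw [Finset.sum_comm]
        rw [Finset.sum_comm (s := (Finset.univ : Finset (Fin nc)))]
        refine Finset.sum_congr rfl fun α _ => ?_
        rw [Finset.sum_comm (s := (Finset.univ : Finset (Fin nc)))]
        refine Finset.sum_congr rfl fun ξ _ => ?_
        rw [Finset.sum_comm (s := (Finset.univ : Finset (Fin nc)))]
        refine Finset.sum_congr rfl fun η _ => ?_
        refine Finset.sum_congr rfl fun βc _ => ?_
        ring
      rw [this]
      simp [hc t z hz]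
    rw [e1, e2, add_zero]
    have e3 : ∀ β, ∑ α : Fin n, varDer1 C x α t z * (J α β t z - R α β t z)
        = -∑ ξ : Fin l, ∑ η : Fin l, Gc lam ξ * K ξ η * G β η t z := fun β => by
      linarith [hb t z hz β]
    simp only [e3, neg_mul, Finset.sum_neg_distrib, Finset.sum_mul, Finset.mul_sum]
    congr 1
    rw [Finset.sum_comm]
    refine Finset.sum_congr rfl fun ξ _ => ?_
    rw [Finset.sum_comm]
    refine Finset.sum_congr rfl fun η _ => ?_
    refine Finset.sum_congr rfl fun β _ => ?_
    ring
  have hval : ∀ t, ∫ z in (0:ℝ)..L, pT (fun t z => C (jet1 x t z)) t z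
      = -∑ ξ, Gc lam ξ * uc ξ t := by
    intro t
    have cy : ∀ η, Continuous fun z => ∑ β, G β η t z * varDer1 H x β t z := fun η =>
      continuous_finset_sum _ fun β _ =>
        ((show SmF (G β η) from hG β η).contZ t).mul ((hx'.varDer hH β).contZ t)
    rw [hint t, intervalIntegral.integral_congr (g := fun z =>
      -∑ ξ, Gc lam ξ * ∑ η, K ξ η * ∑ β, G β η t z * varDer1 H x β t z)
      (fun z hz => hpt t z (by rwa [Set.uIcc_of_le hL.le] at hz))]
    rw [intervalIntegral.integral_neg, intervalIntegral.integral_finset_sum]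
    · congr 1
      refine Finset.sum_congr rfl fun ξ _ => ?_
      rw [intervalIntegral.integral_const_mul, intervalIntegral.integral_finset_sum, huc]
      · simp only [intervalIntegral.integral_const_mul]
      · exact fun η _ => (continuous_const.mul (cy η)).intervalIntegrable _ _
    · exact fun ξ _ => (continuous_const.mul (continuous_finset_sum _ fun η _ =>
        continuous_const.mul (cy η))).intervalIntegrable _ _
  have hD : ∀ t, HasDerivAt (fun t => xc t lam + ∫ z in (0:ℝ)..L, C (jet1 x t z)) 0 t := by
    intro t
    have h := (hcdyn t lam).add (hCS.leibniz L t)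
    rw [hval t] at h
    simp only [ha, zero_mul, Finset.sum_const_zero, zero_add, add_neg_cancel] at h
    exact h
  intro t s
  exact is_const_of_deriv_eq_zero (fun t => (hD t).differentiableAt) (fun t => (hD t).deriv) t s
end
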